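/- arXiv:2004.07762 — 4 statements merged into one kernel-verified Lean document; each statement's English description precedes it below -/
import Mathlib

section
/- Let σ ∈ (0,1), suppose the mesh 𝒯 satisfies (M2)–(M4), and let m ≥ 1. Then there exists a constant C₁(m) > 0, depending only on d, σ, m, C_locuni, C_shape and C_cent, such that for every chain T₀, T₁, …, T_m of pairwise distinct elements of 𝒯 with T_i ∩ T_j = ∅ whenever |i − j| > 1 and T_i ∩ T_j ≠ ∅ whenever |i − j| = 1, every measurable v: Γ → ℂ satisfies |v|_{H^σ(T₀ ∪ T₁ ∪ ⋯ ∪ T_m)}² ≤ C₁(m) · Σ_{i=0}^{m−1} |v|_{H^σ(T_i ∪ T_{i+1})}², the inequality holding in [0,∞]. -/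
/-! The double integral over `(⋃ T_i)²` splits into the cross terms over `T_i × T_j`. If
`|i - j| ≤ 1`, the cross term is part of one of the seminorms on the right-hand side.

If `|i - j| > 1`, then `T_i` and `T_j` are disjoint, so every mesh element meeting `T_i` meets `T_j`
in a null set only; hence almost every point of `T_j` lies outside the patch of `T_i`, and (M4) gives
`diam T_i ≤ Ccent * |x - y|` (`ae_diam_le_edist`). The cross term is thus at most
`(Ccent / diam T_i)^s` times the unweighted integral `D_ij := ∬_{T_i × T_j} |v x - v y|²`, where
`s = d - 1 + 2σ` is the exponent of the kernel (`rpow_mul_kernel_le`). Averaging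
`|v x - v z|² ≤ 2 |v x - v y|² + 2 |v y - v z|²` over `y ∈ T_k` (`cross_three`) and telescoping along
the chain bounds `D_ij` by the neighbouring integrals `D_{l,l+1}` (`cross_chain`); the measures
of the chain elements are comparable by (M2) and (M3) (`measure_comparable`). Finally the kernel on
`T_l ∪ T_{l+1}` is at least `(2 L^m diam T_i)^{-s}`, with `L = max 1 Clocuni`
(`cross_le_mul_semiSq`), so the powers of `diam T_i` cancel. -/

open MeasureTheory Metric Set
open scoped ENNReal NNReal Classical

noncomputable section

/-- `ℝ^d` as a Euclidean space. -/
abbrev Euc (d : ℕ) := EuclideanSpace ℝ (Fin d)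

/-- The `(d-1)`-dimensional Hausdorff measure restricted to `Γ`. -/
def surfMeasure (d : ℕ) (Γ : Set (Euc d)) : Measure (Euc d) :=
  (μH[(d : ℝ) - 1]).restrict Γ

/-- The patch `π^q(ω)` of order `q` of a set `ω` with respect to the mesh `𝒯`. -/
def patchSet {d : ℕ} (𝒯 : Finset (Set (Euc d))) : ℕ → Set (Euc d) → Set (Euc d)
  | 0, ω => ω
  | q + 1, ω => ⋃₀ {T : Set (Euc d) | T ∈ 𝒯 ∧ (T ∩ patchSet 𝒯 q ω).Nonempty}

/-- The collection `Π^q(ω)` of mesh elements contained in the patch `π^q(ω)`. -/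
def PiFin {d : ℕ} (𝒯 : Finset (Set (Euc d))) (q : ℕ) (ω : Set (Euc d)) :
    Finset (Set (Euc d)) :=
  𝒯.filter fun T => T ⊆ patchSet 𝒯 q ω

/-- The local mesh width `h_T := μ(T)^{1/(d-1)}` (as a real number). -/
def hSize (d : ℕ) (Γ : Set (Euc d)) (T : Set (Euc d)) : ℝ :=
  (surfMeasure d Γ T).toReal ^ ((1 : ℝ) / ((d : ℝ) - 1))

/-- Distance between two sets, with the convention `dist(A, ∅) := diam Γ`. -/
def distConv (d : ℕ) (Γ A B : Set (Euc d)) : ℝ :=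
  if B = ∅ then Metric.diam Γ else sInf (Set.image2 dist A B)

/-- The squared Sobolev–Slobodeckij seminorm `|v|_{H^σ(ω)}²`, valued in `[0,∞]`. -/
def semiSq (d : ℕ) (σ : ℝ) (μ : Measure (Euc d)) (v : Euc d → ℂ) (ω : Set (Euc d)) : ℝ≥0∞ :=
  ∫⁻ x in ω, ∫⁻ y in ω,
    ((‖v x - v y‖₊ : ℝ≥0∞)) ^ 2 / edist x y ^ ((d : ℝ) - 1 + 2 * σ) ∂μ ∂μ

/-- The squared seminorm of a `ℂ^D`-valued function: the sum over the components. -/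
def semiSqD (d D : ℕ) (σ : ℝ) (μ : Measure (Euc d)) (v : Euc d → Fin D → ℂ)
    (ω : Set (Euc d)) : ℝ≥0∞ :=
  ∑ j : Fin D, semiSq d σ μ (fun x => v x j) ω

/-- A mesh of `Γ`: a finite collection of compact subsets of `Γ` of positive measure,
covering `Γ`, with pairwise intersections of measure zero. -/
def IsMesh {d : ℕ} (μ : Measure (Euc d)) (Γ : Set (Euc d)) (𝒯 : Finset (Set (Euc d))) : Prop :=
  (∀ T ∈ 𝒯, IsCompact T ∧ T ⊆ Γ ∧ 0 < μ T) ∧ Γ = ⋃₀ ↑𝒯 ∧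
    (∀ T ∈ 𝒯, ∀ T' ∈ 𝒯, T ≠ T' → μ (T ∩ T') = 0)

/-! ### Double integrals over products of sets -/

/-- The double integral of `F` over `A × B`. -/
def cross {X : Type*} [MeasurableSpace X] (μ : Measure X) (F : X → X → ℝ≥0∞) (A B : Set X) :
    ℝ≥0∞ :=
  ∫⁻ x in A, ∫⁻ y in B, F x y ∂μ ∂μ

/-- The squared increment `|v x - v y|²`. -/
def incr {X : Type*} (v : X → ℂ) (x y : X) : ℝ≥0∞ := ((‖v x - v y‖₊ : ℝ≥0∞)) ^ 2

/-- The kernel of the squared Sobolev–Slobodeckij seminorm, with exponent `s = d - 1 + 2σ`. -/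
def kern {X : Type*} [EDist X] (s : ℝ) (v : X → ℂ) (x y : X) : ℝ≥0∞ :=
  incr v x y / edist x y ^ s

lemma incr_comm {X : Type*} (v : X → ℂ) (x y : X) : incr v x y = incr v y x := by
  unfold incr
  rw [← nnnorm_neg, neg_sub]

lemma incr_self {X : Type*} (v : X → ℂ) (x : X) : incr v x x = 0 := by
  simp [incr]

lemma incr_le {X : Type*} (v : X → ℂ) (x y z : X) :
    incr v x z ≤ 2 * (incr v x y + incr v y z) := by
  unfold incr
  have h1 : ‖v x - v z‖₊ ≤ ‖v x - v y‖₊ + ‖v y - v z‖₊ := by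
    have := nnnorm_add_le (v x - v y) (v y - v z)
    simpa using this
  have h2 : ‖v x - v z‖₊ ^ 2 ≤ 2 * (‖v x - v y‖₊ ^ 2 + ‖v y - v z‖₊ ^ 2) :=
    (pow_le_pow_left' h1 2).trans (add_sq_le)
  exact_mod_cast h2

section
variable {X : Type*} [MeasurableSpace X] (μ : Measure X)

lemma measurable_incr {v : X → ℂ} (hv : Measurable v) :
    Measurable (Function.uncurry (incr v)) := by
  unfold incr Function.uncurry
  fun_prop

lemma cross_comm [SFinite μ] {F : X → X → ℝ≥0∞} (hF : Measurable (Function.uncurry F))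
    (hs : ∀ x y, F x y = F y x) (A B : Set X) : cross μ F A B = cross μ F B A := by
  unfold cross
  rw [lintegral_lintegral_swap hF.aemeasurable]
  simp_rw [hs]

lemma cross_mono (F : X → X → ℝ≥0∞) {A B S : Set X} (hA : A ⊆ S) (hB : B ⊆ S) :
    cross μ F A B ≤ cross μ F S S :=
  (lintegral_mono fun _ => lintegral_mono_set hB).trans (lintegral_mono_set hA)

lemma cross_iUnion_le [SFinite μ] {ι : Type*} [Fintype ι] {F : X → X → ℝ≥0∞}
    (hF : Measurable (Function.uncurry F)) (T : ι → Set X) :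
    cross μ F (⋃ i, T i) (⋃ i, T i) ≤ ∑ i, ∑ j, cross μ F (T i) (T j) := by
  unfold cross
  refine (lintegral_iUnion_le _ _).trans ?_
  rw [tsum_fintype]
  refine Finset.sum_le_sum fun i _ => ?_
  rw [← lintegral_finsetSum _ fun j _ => hF.lintegral_prod_right]
  refine lintegral_mono fun x => ?_
  refine (lintegral_iUnion_le _ _).trans ?_
  rw [tsum_fintype]

/-- The squared triangle inequality through an intermediate point, averaged over that point. -/
lemma cross_three [SFinite μ] {v : X → ℂ} (hv : Measurable v) (A B C : Set X) :
    cross μ (incr v) A C * μ B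
      ≤ 2 * (cross μ (incr v) A B * μ C + cross μ (incr v) B C * μ A) := by
  have hm := measurable_incr hv
  have hx : ∀ x, Measurable (incr v x) := fun x => hm.of_uncurry_left
  have hi : ∀ S : Set X, Measurable fun x => ∫⁻ y in S, incr v x y ∂μ :=
    fun S => hm.lintegral_prod_right
  have key : ∀ x z, incr v x z * μ B
      ≤ 2 * (∫⁻ y in B, incr v x y ∂μ + ∫⁻ y in B, incr v z y ∂μ) := by
    intro x z
    rw [← lintegral_add_left (hx x), ← lintegral_const_mul (f := fun y => incr v x y + incr v z y) _ ((hx x).add (hx z)),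
      ← setLIntegral_const]
    refine lintegral_mono fun y => ?_
    simpa [incr_comm v z y] using incr_le v x y z
  rw [cross_comm μ hm (incr_comm v) B C]
  unfold cross
  rw [← lintegral_mul_const _ (hi C), ← lintegral_mul_const _ (hi B), ← setLIntegral_const A,
    ← lintegral_add_left ((hi B).mul_const _),
    ← lintegral_const_mul' _ _ (by norm_num)]
  refine lintegral_mono fun x => ?_
  rw [← lintegral_mul_const _ (hx x), ← setLIntegral_const C, ← lintegral_add_left measurable_const,
    ← lintegral_const_mul' _ _ (by norm_num)]
  exact lintegral_mono fun z => key x z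

/-- Telescoping along a chain of sets of comparable measure. -/
lemma cross_chain [SFinite μ] {v : X → ℂ} (hv : Measurable v) {m : ℕ} (T : Fin (m + 1) → Set X)
    (R : ℝ≥0∞) (hR : 1 ≤ R) (h0 : ∀ i, μ (T i) ≠ 0) (htop : ∀ i, μ (T i) ≠ ⊤)
    (hT : ∀ i j, μ (T i) ≤ R * μ (T j)) (n : ℕ) (i j : Fin (m + 1))
    (hij : (j : ℕ) = i + n + 1) :
    cross μ (incr v) (T i) (T j)
      ≤ (4 * R) ^ n * ∑ l : Fin m, cross μ (incr v) (T l.castSucc) (T l.succ) := by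
  set S := ∑ l : Fin m, cross μ (incr v) (T l.castSucc) (T l.succ) with hS
  have hadj : ∀ i j : Fin (m + 1), (j : ℕ) = i + 1 → cross μ (incr v) (T i) (T j) ≤ S := by
    intro i j h
    have hi : (i : ℕ) < m := by omega
    have := Finset.single_le_sum
      (f := fun l : Fin m => cross μ (incr v) (T l.castSucc) (T l.succ))
      (fun _ _ => zero_le) (Finset.mem_univ (⟨i, hi⟩ : Fin m))
    have e1 : (⟨i, hi⟩ : Fin m).castSucc = i := rfl
    have e2 : (⟨i, hi⟩ : Fin m).succ = j := Fin.ext (by simp [h])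
    simpa only [e1, e2] using this
  induction n generalizing j with
  | zero => simpa using hadj i j (by omega)
  | succ n ih =>
    have hk : (i : ℕ) + n + 1 < m + 1 := by omega
    set k : Fin (m + 1) := ⟨i + n + 1, hk⟩ with hkdef
    have h1 := ih k rfl
    have h2 := hadj k j (by simp [hkdef, hij]; omega)
    have h3 : 1 ≤ (4 * R) ^ n :=
      one_le_pow_of_one_le' (hR.trans (le_mul_of_one_le_left' (by norm_num))) n
    have h4 : S ≤ (4 * R) ^ n * S := le_mul_of_one_le_left' h3
    rw [← ENNReal.mul_le_mul_iff_left (h0 k) (htop k)]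
    calc cross μ (incr v) (T i) (T j) * μ (T k)
        ≤ 2 * (cross μ (incr v) (T i) (T k) * μ (T j) + cross μ (incr v) (T k) (T j) * μ (T i)) :=
          cross_three μ hv _ _ _
      _ ≤ 2 * (((4 * R) ^ n * S) * (R * μ (T k)) + ((4 * R) ^ n * S) * (R * μ (T k))) := by
          gcongr
          · exact hT _ _
          · exact h2.trans h4
          · exact hT _ _
      _ = (4 * R) ^ (n + 1) * S * μ (T k) := by ring

end

/-! ### Comparison of the kernel with the squared increment -/

lemma rpow_mul_kernel_le {X : Type*} [PseudoEMetricSpace X] {s : ℝ} (hs : 0 ≤ s) (v : X → ℂ)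
    {δ c : ℝ≥0∞} {x y : X} (h : δ ≤ c * edist x y) :
    δ ^ s * kern s v x y ≤ c ^ s * incr v x y := by
  calc δ ^ s * kern s v x y ≤ (c * edist x y) ^ s * kern s v x y := by gcongr
    _ = c ^ s * (edist x y ^ s * (incr v x y / edist x y ^ s)) := by
        rw [ENNReal.mul_rpow_of_nonneg _ _ hs, mul_assoc, kern]
    _ ≤ c ^ s * incr v x y := by gcongr; exact ENNReal.mul_div_le

lemma incr_le_rpow_mul_kern {X : Type*} [EMetricSpace X] {s : ℝ} (hs : 0 ≤ s) (v : X → ℂ)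
    {E : ℝ≥0∞} {x y : X} (h : edist x y ≤ E) (hfin : edist x y ≠ ⊤) :
    incr v x y ≤ E ^ s * kern s v x y := by
  rcases eq_or_ne x y with rfl | hxy
  · simp [incr_self]
  have h0 : edist x y ≠ 0 := by simpa using hxy
  calc incr v x y = edist x y ^ s * kern s v x y := by
        rw [kern, ENNReal.mul_div_cancel]
        · simp [ENNReal.rpow_eq_zero_iff, h0, hfin]
        · exact ENNReal.rpow_ne_top_of_nonneg hs hfin
    _ ≤ E ^ s * kern s v x y := by gcongr

lemma semiSq_eq_cross (d : ℕ) (σ : ℝ) (μ : Measure (Euc d)) (v : Euc d → ℂ) (ω : Set (Euc d)) :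
    semiSq d σ μ v ω = cross μ (kern ((d : ℝ) - 1 + 2 * σ) v) ω ω := rfl

lemma kern_comm {X : Type*} [PseudoEMetricSpace X] (s : ℝ) (v : X → ℂ) (x y : X) :
    kern s v x y = kern s v y x := by
  unfold kern
  rw [incr_comm, edist_comm]

lemma measurable_kern {d : ℕ} (s : ℝ) {v : Euc d → ℂ} (hv : Measurable v) :
    Measurable (Function.uncurry (kern s v)) := by
  have h := measurable_incr hv
  unfold Function.uncurry at h
  unfold kern Function.uncurry
  exact h.div (measurable_edist.pow_const s)

lemma cross_le_mul_semiSq {d : ℕ} {σ : ℝ} (hs : 0 ≤ (d : ℝ) - 1 + 2 * σ) (μ : Measure (Euc d))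
    {v : Euc d → ℂ} (hv : Measurable v) [SFinite μ] {A B : Set (Euc d)} (hA : IsCompact A)
    (hB : IsCompact B) (hAB : (A ∩ B).Nonempty) {M : ℝ} (hMA : diam A ≤ M) (hMB : diam B ≤ M) :
    cross μ (incr v) A B
      ≤ ENNReal.ofReal (2 * M) ^ ((d : ℝ) - 1 + 2 * σ) * semiSq d σ μ v (A ∪ B) := by
  obtain ⟨p, hpA, hpB⟩ := hAB
  rw [semiSq_eq_cross]
  set s := (d : ℝ) - 1 + 2 * σ
  have hm := measurable_kern s hv
  refine le_trans ?_ (mul_le_mul_right (cross_mono μ (kern s v) (A := A) (B := B)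
    subset_union_left subset_union_right) _)
  unfold cross
  rw [← lintegral_const_mul _ hm.lintegral_prod_right]
  refine setLIntegral_mono (hm.lintegral_prod_right.const_mul _) fun x hx => ?_
  have hmx : Measurable (kern s v x) := hm.of_uncurry_left
  rw [← lintegral_const_mul _ hmx]
  refine setLIntegral_mono (hmx.const_mul _) fun y hy => ?_
  refine incr_le_rpow_mul_kern hs v ?_ (edist_ne_top _ _)
  rw [edist_dist]
  refine ENNReal.ofReal_le_ofReal ?_
  have h1 := dist_le_diam_of_mem hA.isBounded hx hpA
  have h2 := dist_le_diam_of_mem hB.isBounded hpB hy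
  linarith [dist_triangle x p y]

/-! ### Geometry of the mesh -/

lemma subset_patchSet {d : ℕ} {𝒯 : Finset (Set (Euc d))} {A B : Set (Euc d)} (hB : B ∈ 𝒯)
    (h : (B ∩ A).Nonempty) : B ⊆ patchSet 𝒯 1 A :=
  fun _ hx => ⟨B, ⟨hB, h⟩, hx⟩

/-- Almost all of an element disjoint from `A` lies outside the patch of `A`, so that (M4) bounds
the distance of its points from `A` from below. -/
lemma ae_diam_le_edist {d : ℕ} {Γ : Set (Euc d)} {𝒯 : Finset (Set (Euc d))} {Ccent : ℝ}
    (hC : 0 < Ccent) {μ : Measure (Euc d)} (hmesh : IsMesh μ Γ 𝒯) {A B : Set (Euc d)}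
    (hB : B ∈ 𝒯) (hAB : A ∩ B = ∅)
    (hM4 : diam A ≤ Ccent * distConv d Γ A (Γ \ patchSet 𝒯 1 A)) :
    ∀ᵐ y ∂μ.restrict B, ∀ x ∈ A,
      ENNReal.ofReal (diam A) ≤ ENNReal.ofReal Ccent * edist x y := by
  have hae : ∀ᵐ y ∂μ.restrict B, y ∉ patchSet 𝒯 1 A := by
    have h1 : ∀ᵐ y ∂μ.restrict B, ∀ T ∈ 𝒯, (T ∩ A).Nonempty → y ∉ T := by
      rw [Filter.eventually_all_finset]
      intro T hT
      rw [Filter.eventually_imp_distrib_left]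
      intro hTA
      have hne : T ≠ B := by
        rintro rfl
        rw [inter_comm, hAB] at hTA
        exact not_nonempty_empty hTA
      rw [ae_iff]
      simp only [not_not, ofPred_mem_eq]
      rw [Measure.restrict_apply (hmesh.1 T hT).1.measurableSet]
      exact hmesh.2.2 T hT B hB hne
    filter_upwards [h1] with y hy
    rintro ⟨T, ⟨hT, hTA⟩, hyT⟩
    exact hy T hT hTA hyT
  filter_upwards [hae, ae_restrict_mem (hmesh.1 B hB).1.measurableSet] with y hy hyB x hx
  have hyΓ : y ∈ Γ \ patchSet 𝒯 1 A := ⟨(hmesh.1 B hB).2.1 hyB, hy⟩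
  rw [edist_dist, ← ENNReal.ofReal_mul hC.le]
  refine ENNReal.ofReal_le_ofReal (hM4.trans ?_)
  rw [distConv, if_neg (nonempty_iff_ne_empty.1 ⟨y, hyΓ⟩)]
  gcongr
  refine csInf_le ⟨0, ?_⟩ (mem_image2_of_mem hx hyΓ)
  rintro _ ⟨a, _, b, _, rfl⟩
  exact dist_nonneg

/-- Diameters of any two chain elements are comparable, by (M2) for consecutive elements. -/
lemma diam_comparable {d m : ℕ} {𝒯 : Finset (Set (Euc d))} {Clocuni : ℝ}
    (hM2 : ∀ T ∈ 𝒯, ∀ T' ∈ PiFin 𝒯 1 T, diam T ≤ Clocuni * diam T')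
    {T : Fin (m + 1) → Set (Euc d)} (hT : ∀ i, T i ∈ 𝒯)
    (hadj : ∀ i j : Fin (m + 1), (i : ℕ) + 1 = (j : ℕ) → (T i ∩ T j).Nonempty)
    (i j : Fin (m + 1)) : diam (T i) ≤ max 1 Clocuni ^ m * diam (T j) := by
  set L := max 1 Clocuni
  have hL : 1 ≤ L := le_max_left _ _
  have hnb : ∀ A ∈ 𝒯, ∀ B ∈ 𝒯, (B ∩ A).Nonempty → diam A ≤ L * diam B := by
    intro A hA B hB h
    refine (hM2 A hA B (Finset.mem_filter.2 ⟨hB, subset_patchSet hB h⟩)).trans ?_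
    exact mul_le_mul_of_nonneg_right (le_max_right _ _) diam_nonneg
  have key : ∀ (n : ℕ) (i j : Fin (m + 1)), (j : ℕ) = i + n →
      diam (T i) ≤ L ^ n * diam (T j) ∧ diam (T j) ≤ L ^ n * diam (T i) := by
    intro n
    induction n with
    | zero =>
      intro i j h
      obtain rfl : j = i := Fin.ext (by omega)
      simp
    | succ n ih =>
      intro i j h
      have hk : (i : ℕ) + n < m + 1 := by omega
      obtain ⟨h1, h2⟩ := ih i ⟨i + n, hk⟩ rfl
      have hne := hadj ⟨i + n, hk⟩ j (by simp [h]; omega)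
      have h3 := hnb _ (hT ⟨i + n, hk⟩) _ (hT j) (by rwa [inter_comm])
      have h4 := hnb _ (hT j) _ (hT ⟨i + n, hk⟩) hne
      constructor
      · calc _ ≤ _ := h1
          _ ≤ L ^ n * (L * diam (T j)) := by gcongr
          _ = _ := by ring
      · calc _ ≤ _ := h4
          _ ≤ L * (L ^ n * diam (T i)) := by gcongr
          _ = _ := by ring
  have hpow : ∀ n ≤ m, ∀ k, L ^ n * diam (T k) ≤ L ^ m * diam (T k) := fun n hn k =>
    mul_le_mul_of_nonneg_right (pow_le_pow_right₀ hL hn) diam_nonneg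
  rcases le_total (i : ℕ) j with h | h
  · exact ((key (j - i) i j (by omega)).1).trans (hpow _ (by omega) _)
  · exact ((key (i - j) j i (by omega)).2).trans (hpow _ (by omega) _)

lemma shape_bounds {D h C : ℝ} (hC : 0 < C) (hD : 0 ≤ D) (h1 : C⁻¹ ≤ D / h) (h2 : D / h ≤ C)
    (hh : 0 ≤ h) : 0 < D ∧ h ≤ C * D ∧ D ≤ C * h := by
  have hpos : 0 < D / h := (inv_pos.2 hC).trans_le h1
  -- `h = 0` would make the quotient zero.
  have hh0 : 0 < h := hh.lt_of_ne (by rintro rfl; simp at hpos)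
  have hD0 : 0 < D := hD.lt_of_ne (by rintro rfl; simp at hpos)
  refine ⟨hD0, ?_, (div_le_iff₀ hh0).1 h2⟩
  rw [le_div_iff₀ hh0, inv_mul_le_iff₀ hC] at h1
  exact h1

lemma measure_comparable {d : ℕ} (hd : 2 ≤ d) {Γ A B : Set (Euc d)} {C M : ℝ} (hC : 0 < C)
    (hM : 0 ≤ M) (hA : surfMeasure d Γ A ≠ ⊤) (hB : surfMeasure d Γ B ≠ ⊤)
    (hA1 : hSize d Γ A ≤ C * diam A) (hB1 : diam B ≤ C * hSize d Γ B)
    (hAB : diam A ≤ M * diam B) :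
    surfMeasure d Γ A ≤ ENNReal.ofReal ((C * (M * C)) ^ ((d : ℝ) - 1)) * surfMeasure d Γ B := by
  have hd1 : (0 : ℝ) < (d : ℝ) - 1 := by
    have : (2 : ℝ) ≤ d := by exact_mod_cast hd
    linarith
  have hrec : ∀ S : Set (Euc d),
      (surfMeasure d Γ S).toReal = hSize d Γ S ^ ((d : ℝ) - 1) := by
    intro S
    rw [hSize, ← Real.rpow_mul ENNReal.toReal_nonneg, one_div, inv_mul_cancel₀ hd1.ne',
      Real.rpow_one]
  have hnn : ∀ S : Set (Euc d), 0 ≤ hSize d Γ S := fun S =>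
    Real.rpow_nonneg ENNReal.toReal_nonneg _
  have hle : hSize d Γ A ≤ (C * (M * C)) * hSize d Γ B := by
    calc hSize d Γ A ≤ C * (M * (C * hSize d Γ B)) := by
          refine hA1.trans ?_
          gcongr
          refine hAB.trans ?_
          gcongr
      _ = _ := by ring
  rw [← ENNReal.ofReal_toReal hA, ← ENNReal.ofReal_toReal hB, ← ENNReal.ofReal_mul (by positivity),
    hrec, hrec, ← Real.mul_rpow (by positivity) (hnn B)]
  exact ENNReal.ofReal_le_ofReal (Real.rpow_le_rpow (hnn A) hle hd1.le)

/-! ### The chain estimate -/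

/-- chain estimate, Step 1 of Lemma 4.6. Under (M2)–(M4) there is a constant
`C₁(m) > 0` (depending only on `d`, `σ`, `m`, `C_locuni`, `C_shape`, `C_cent`) such that for
every chain `T₀, …, T_m` of pairwise distinct mesh elements whose members intersect exactly
when adjacent, every measurable `v : Γ → ℂ` satisfies
`|v|²_{H^σ(T₀∪⋯∪T_m)} ≤ C₁(m) Σ_{i<m} |v|²_{H^σ(T_i∪T_{i+1})}` in `[0,∞]`. -/
theorem stmt_9 (d : ℕ) (hd : 2 ≤ d) (σ : ℝ) (hσ : σ ∈ Set.Ioo (0 : ℝ) 1)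
    (m : ℕ) (hm : 1 ≤ m)
    (Clocuni Cshape Ccent : ℝ) (hClocuni : 0 < Clocuni) (hCshape : 0 < Cshape)
    (hCcent : 0 < Ccent) :
    ∃ C : ℝ, 0 < C ∧
      ∀ (Γ : Set (Euc d)), IsCompact Γ →
        0 < (μH[(d : ℝ) - 1] : Measure (Euc d)) Γ →
        (μH[(d : ℝ) - 1] : Measure (Euc d)) Γ < ⊤ →
        ∀ 𝒯 : Finset (Set (Euc d)), IsMesh (surfMeasure d Γ) Γ 𝒯 →
        -- (M2) local quasi-uniformity
        (∀ T ∈ 𝒯, ∀ T' ∈ PiFin 𝒯 1 T, Metric.diam T ≤ Clocuni * Metric.diam T') →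
        -- (M3) shape-regularity
        (∀ T ∈ 𝒯, Cshape⁻¹ ≤ Metric.diam T / hSize d Γ T ∧
          Metric.diam T / hSize d Γ T ≤ Cshape) →
        -- (M4) elements lie in the center of their patches
        (∀ T ∈ 𝒯, Metric.diam T ≤ Ccent * distConv d Γ T (Γ \ patchSet 𝒯 1 T)) →
        -- a chain T₀, T₁, …, T_m
        ∀ T : Fin (m + 1) → Set (Euc d),
          (∀ i, T i ∈ 𝒯) → Function.Injective T →
          (∀ i j : Fin (m + 1), (i : ℕ) + 1 < (j : ℕ) → T i ∩ T j = ∅) →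
          (∀ i j : Fin (m + 1), (i : ℕ) + 1 = (j : ℕ) → (T i ∩ T j).Nonempty) →
          ∀ v : Euc d → ℂ, Measurable v →
            semiSq d σ (surfMeasure d Γ) v (⋃ i, T i)
              ≤ ENNReal.ofReal C *
                  ∑ i : Fin m,
                    semiSq d σ (surfMeasure d Γ) v (T i.castSucc ∪ T i.succ) := by
  have hd2 : (2 : ℝ) ≤ d := by exact_mod_cast hd
  obtain ⟨hσ0, -⟩ := hσ
  set s : ℝ := (d : ℝ) - 1 + 2 * σ with hsdef
  have hs : 0 < s := by linarith
  set P : ℝ := max 1 Clocuni ^ m with hPdef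
  have hP0 : 0 < P := pow_pos (lt_of_lt_of_le one_pos (le_max_left _ _)) m
  set R : ℝ := max 1 ((Cshape * (P * Cshape)) ^ ((d : ℝ) - 1)) with hRdef
  have hR0 : 0 < R := lt_of_lt_of_le one_pos (le_max_left _ _)
  -- `Q` bounds the cross terms of non-adjacent elements, `1` those of adjacent ones.
  set Q : ℝ := (Ccent * (2 * P)) ^ s * (4 * R) ^ m with hQdef
  have hQ0 : 0 < Q := by positivity
  refine ⟨((m : ℝ) + 1) * ((m + 1) * (1 + Q)), by positivity, ?_⟩
  intro Γ _ _ hΓtop 𝒯 hmesh hM2 hM3 hM4 T hT _ hfar hadj v hv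
  set μ := surfMeasure d Γ with hμ
  have : IsFiniteMeasure μ := ⟨by
    rw [hμ, surfMeasure, Measure.restrict_apply_univ]; exact hΓtop⟩
  have hcpt : ∀ i, IsCompact (T i) := fun i => (hmesh.1 _ (hT i)).1
  have hdiam : ∀ i j, diam (T i) ≤ P * diam (T j) := diam_comparable hM2 hT hadj
  have hshape : ∀ i, 0 < diam (T i) ∧ hSize d Γ (T i) ≤ Cshape * diam (T i) ∧
      diam (T i) ≤ Cshape * hSize d Γ (T i) := fun i =>
    shape_bounds hCshape diam_nonneg (hM3 _ (hT i)).1 (hM3 _ (hT i)).2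
      (Real.rpow_nonneg ENNReal.toReal_nonneg _)
  have hmeas : ∀ i j, μ (T i) ≤ ENNReal.ofReal R * μ (T j) := fun i j =>
    (measure_comparable hd hCshape hP0.le (measure_ne_top μ _) (measure_ne_top μ _)
      (hshape i).2.1 (hshape j).2.2 (hdiam i j)).trans
      (mul_le_mul_left (ENNReal.ofReal_le_ofReal (le_max_right _ _)) _)
  set S := ∑ i : Fin m, semiSq d σ μ v (T i.castSucc ∪ T i.succ) with hSdef
  have hkm := measurable_kern s hv
  have hterm : ∀ l : Fin m, semiSq d σ μ v (T l.castSucc ∪ T l.succ) ≤ S := fun l =>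
    Finset.single_le_sum (f := fun l : Fin m => semiSq d σ μ v (T l.castSucc ∪ T l.succ))
      (fun _ _ => zero_le) (Finset.mem_univ l)
  have hnear : ∀ i j : Fin (m + 1), (i : ℕ) ≤ j → (j : ℕ) ≤ i + 1 →
      cross μ (kern s v) (T i) (T j) ≤ S := by
    intro i j h1 h2
    -- The last diagonal term has to be absorbed by the preceding pair.
    obtain ⟨l, hi, hj⟩ : ∃ l : Fin m, (i = l.castSucc ∨ i = l.succ) ∧
        (j = l.castSucc ∨ j = l.succ) := by
      by_cases him : (i : ℕ) < m
      · exact ⟨⟨i, him⟩, Or.inl rfl, by simp only [Fin.ext_iff, Fin.val_castSucc, Fin.val_succ]; omega⟩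
      · exact ⟨⟨m - 1, by omega⟩, by simp only [Fin.ext_iff, Fin.val_castSucc, Fin.val_succ]; omega,
          by simp only [Fin.ext_iff, Fin.val_castSucc, Fin.val_succ]; omega⟩
    refine le_trans ?_ (hterm l)
    refine cross_mono μ (kern s v) ?_ ?_
    · rcases hi with rfl | rfl
      exacts [subset_union_left, subset_union_right]
    · rcases hj with rfl | rfl
      exacts [subset_union_left, subset_union_right]
  have hfarb : ∀ i j : Fin (m + 1), (i : ℕ) + 1 < j →
      cross μ (kern s v) (T i) (T j) ≤ ENNReal.ofReal Q * S := by
    intro i j hij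
    set δ := ENNReal.ofReal (diam (T i)) with hδ
    have hδ0 : δ ≠ 0 := by simpa [hδ] using (hshape i).1
    have hδs0 : δ ^ s ≠ 0 :=
      (ENNReal.rpow_pos (pos_iff_ne_zero.2 hδ0) ENNReal.ofReal_ne_top).ne'
    have hδst : δ ^ s ≠ ⊤ := ENNReal.rpow_ne_top_of_nonneg hs.le ENNReal.ofReal_ne_top
    have hae := ae_diam_le_edist hCcent hmesh (hT j) (hfar i j hij) (hM4 _ (hT i))
    have h1 : δ ^ s * cross μ (kern s v) (T i) (T j)
        ≤ ENNReal.ofReal Ccent ^ s * cross μ (incr v) (T i) (T j) := by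
      have him := measurable_incr hv
      unfold cross
      rw [← lintegral_const_mul _ hkm.lintegral_prod_right,
        ← lintegral_const_mul _ him.lintegral_prod_right]
      refine setLIntegral_mono (him.lintegral_prod_right.const_mul _) fun x hx => ?_
      rw [← lintegral_const_mul _ hkm.of_uncurry_left, ← lintegral_const_mul _ him.of_uncurry_left]
      refine lintegral_mono_ae ?_
      filter_upwards [hae] with y hy
      exact rpow_mul_kernel_le hs.le v (hy x hx)
    have h2 := cross_chain μ hv T (ENNReal.ofReal R)
      (by rw [← ENNReal.ofReal_one]; exact ENNReal.ofReal_le_ofReal (le_max_left _ _))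
      (fun i => (hmesh.1 _ (hT i)).2.2.ne') (fun i => measure_ne_top μ _) hmeas
      (j - i - 1) i j (by omega)
    have h3 : ∑ l : Fin m, cross μ (incr v) (T l.castSucc) (T l.succ)
        ≤ ENNReal.ofReal (2 * P) ^ s * δ ^ s * S := by
      rw [hSdef, Finset.mul_sum]
      refine Finset.sum_le_sum fun l _ => ?_
      have := cross_le_mul_semiSq (σ := σ) hs.le μ hv (hcpt l.castSucc) (hcpt l.succ)
        (hadj l.castSucc l.succ (by simp)) (hdiam l.castSucc i) (hdiam l.succ i)
      rw [← mul_assoc 2 P, ENNReal.ofReal_mul (by positivity),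
        ENNReal.mul_rpow_of_nonneg _ _ hs.le] at this
      exact this
    have h4 : (4 * ENNReal.ofReal R) ^ ((j : ℕ) - i - 1) ≤ (4 * ENNReal.ofReal R) ^ m := by
      refine pow_le_pow_right₀ ?_ (by omega)
      have : (1 : ℝ≥0∞) ≤ ENNReal.ofReal R := by
        rw [← ENNReal.ofReal_one]; exact ENNReal.ofReal_le_ofReal (le_max_left _ _)
      exact this.trans (le_mul_of_one_le_left' (by norm_num))
    have hQ : ENNReal.ofReal Q = ENNReal.ofReal Ccent ^ s * ENNReal.ofReal (2 * P) ^ s *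
        (4 * ENNReal.ofReal R) ^ m := by
      rw [hQdef, ENNReal.ofReal_mul (by positivity), ENNReal.ofReal_pow (by positivity),
        ENNReal.ofReal_mul (by norm_num : (0 : ℝ) ≤ 4),
        ← ENNReal.ofReal_rpow_of_nonneg (by positivity) hs.le, ENNReal.ofReal_mul hCcent.le,
        ENNReal.mul_rpow_of_nonneg _ _ hs.le]
      norm_num
    rw [← ENNReal.mul_le_mul_iff_right hδs0 hδst]
    calc δ ^ s * cross μ (kern s v) (T i) (T j)
        ≤ ENNReal.ofReal Ccent ^ s * ((4 * ENNReal.ofReal R) ^ m *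
            (ENNReal.ofReal (2 * P) ^ s * δ ^ s * S)) := by
          refine h1.trans ?_
          gcongr
          exact h2.trans (mul_le_mul' h4 h3)
      _ = δ ^ s * (ENNReal.ofReal Q * S) := by rw [hQ]; ring
  have hle : ∀ i j : Fin (m + 1), (i : ℕ) ≤ j →
      cross μ (kern s v) (T i) (T j) ≤ ENNReal.ofReal (1 + Q) * S := by
    intro i j hij
    rw [ENNReal.ofReal_add zero_le_one hQ0.le, ENNReal.ofReal_one, add_mul, one_mul]
    by_cases h : (j : ℕ) ≤ i + 1
    · exact (hnear i j hij h).trans le_self_add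
    · exact (hfarb i j (by omega)).trans le_add_self
  have hall : ∀ i j : Fin (m + 1),
      cross μ (kern s v) (T i) (T j) ≤ ENNReal.ofReal (1 + Q) * S := by
    intro i j
    rcases le_total (i : ℕ) j with h | h
    · exact hle i j h
    · rw [cross_comm μ hkm (kern_comm s v)]
      exact hle j i h
  have hm1 : ENNReal.ofReal ((m : ℝ) + 1) = (m : ℝ≥0∞) + 1 := by
    rw [ENNReal.ofReal_add (by positivity) zero_le_one]; simp
  calc semiSq d σ μ v (⋃ i, T i) ≤ ∑ i, ∑ j, cross μ (kern s v) (T i) (T j) :=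
        cross_iUnion_le μ hkm T
    _ ≤ ∑ _i : Fin (m + 1), ∑ _j : Fin (m + 1), ENNReal.ofReal (1 + Q) * S :=
        Finset.sum_le_sum fun i _ => Finset.sum_le_sum fun j _ => hall i j
    _ = ENNReal.ofReal (((m : ℝ) + 1) * ((m + 1) * (1 + Q))) * S := by
        rw [ENNReal.ofReal_mul (by positivity), ENNReal.ofReal_mul (by positivity), hm1]
        simp only [Finset.sum_const, Finset.card_univ, Fintype.card_fin, nsmul_eq_mul]
        push_cast
        ring
end
end

section
/- Suppose the mesh 𝒯 satisfies (M1)–(M4). Then there exists a constant C > 0, depending only on d, C_patch, C_locuni, C_shape and C_cent, such that for every subset 𝒮 ⊆ 𝒯 there exist an open set O ⊆ ℝ^d with Γ ⊂ O and a C^∞ function χ: O → ℝ with the following properties: 0 ≤ χ ≤ 1 on O; χ(x) = 1 for all x ∈ ⋃𝒮; χ(x) = 0 for all x ∈ Γ∖π(⋃𝒮); and |∇χ(x)| ≤ C · h_T^{−1} for every T ∈ 𝒯 and every x ∈ T. -/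
/-!
The cut-off is `χ = 1 - ∏_{T ∈ 𝒮} (1 - η_T)`, where `η_T` is a smooth function with values in
`[0,1]`, equal to `1` on `T`, vanishing at distance at least `diam T / Ccent` from `T`, and with
gradient at most `M / diam T`, where `M` depends only on `d` and `Ccent` (`exists_bump`). By (M4)
`η_T` vanishes on `Γ \ π(T)`, and so does its gradient, since such points are minima of `η_T`.

At a point `x` of a mesh element `T'`, only those `T ∈ 𝒮` with `x ∈ π(T)` contribute to `∇χ`. For
such a `T` there is `T'' ∋ x` meeting both `T'` and `T`, so (M1) leaves at most `Cpatch ^ 2`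
of them and (M2) gives `diam T' ≤ Clocuni ^ 2 * diam T`. By (M3), `diam T'` may be replaced by
`h_{T'}`.

The functions `η_T` are obtained by rescaling `T` to diameter one: a translate of the rescaled
set lies in the unit ball, which is covered once and for all by finitely many small balls; the
translated bumps attached to the balls meeting the rescaled set are combined by the same product
formula.
-/

open MeasureTheory Metric Set
open scoped ENNReal NNReal Classical

noncomputable section

/-- Since all factors lie in `[0,1]`, the coefficients in the product rule are at most one. -/
lemma norm_fderiv_one_sub_prod_le {d : ℕ} {ι : Type*} (s : Finset ι) (f : ι → Euc d → ℝ)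
    (hf : ∀ i ∈ s, ContDiff ℝ (⊤ : ℕ∞) (f i)) (h01 : ∀ i ∈ s, ∀ x, 0 ≤ f i x ∧ f i x ≤ 1)
    (x : Euc d) :
    ‖fderiv ℝ (fun y => 1 - ∏ i ∈ s, (1 - f i y)) x‖ ≤ ∑ i ∈ s, ‖fderiv ℝ (f i) x‖ := by
  have hd : ∀ i ∈ s, HasFDerivAt (fun y => 1 - f i y) (-(fderiv ℝ (f i) x)) x := fun i hi =>
    ((((hf i hi).differentiable (by simp)) x).hasFDerivAt).const_sub 1
  have h := (HasFDerivAt.finsetProd hd).const_sub 1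
  rw [h.fderiv, norm_neg]
  refine (norm_sum_le _ _).trans (Finset.sum_le_sum fun i hi => ?_)
  rw [norm_smul, norm_neg]
  refine mul_le_of_le_one_left (norm_nonneg _) ?_
  rw [Real.norm_eq_abs, Finset.abs_prod]
  refine Finset.prod_le_one (fun _ _ => abs_nonneg _) fun j hj => ?_
  have := h01 j (Finset.mem_of_mem_erase hj) x
  rw [abs_le]
  constructor <;> linarith

lemma contDiff_one_sub_prod {d : ℕ} {ι : Type*} (s : Finset ι) (f : ι → Euc d → ℝ)
    (hf : ∀ i ∈ s, ContDiff ℝ (⊤ : ℕ∞) (f i)) :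
    ContDiff ℝ (⊤ : ℕ∞) (fun y => 1 - ∏ i ∈ s, (1 - f i y)) :=
  contDiff_const.sub (contDiff_prod fun i hi => contDiff_const.sub (hf i hi))

lemma one_sub_prod_mem {d : ℕ} {ι : Type*} (s : Finset ι) (f : ι → Euc d → ℝ)
    (h01 : ∀ i ∈ s, ∀ x, 0 ≤ f i x ∧ f i x ≤ 1) (x : Euc d) :
    0 ≤ 1 - ∏ i ∈ s, (1 - f i x) ∧ 1 - ∏ i ∈ s, (1 - f i x) ≤ 1 := by
  have h1 : ∏ i ∈ s, (1 - f i x) ≤ 1 :=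
    Finset.prod_le_one (fun i hi => by linarith [(h01 i hi x).2])
      (fun i hi => by linarith [(h01 i hi x).1])
  have h2 : 0 ≤ ∏ i ∈ s, (1 - f i x) :=
    Finset.prod_nonneg (fun i hi => by linarith [(h01 i hi x).2])
  constructor <;> linarith

lemma one_sub_prod_eq_one {d : ℕ} {ι : Type*} (s : Finset ι) (f : ι → Euc d → ℝ)
    (x : Euc d) {i : ι} (hi : i ∈ s) (h : f i x = 1) : 1 - ∏ i ∈ s, (1 - f i x) = 1 := by
  rw [Finset.prod_eq_zero hi (by simp [h]), sub_zero]

lemma one_sub_prod_eq_zero {d : ℕ} {ι : Type*} (s : Finset ι) (f : ι → Euc d → ℝ)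
    (x : Euc d) (h : ∀ i ∈ s, f i x = 0) : 1 - ∏ i ∈ s, (1 - f i x) = 0 := by
  rw [Finset.prod_eq_one (fun i hi => by simp [h i hi]), sub_self]

/-- Smooth cut-off of a bounded set at a distance proportional to its diameter. The constant `M`
in the gradient bound is uniform over all sets `A`. -/
lemma exists_bump (d : ℕ) (ε : ℝ) (hε : 0 < ε) :
    ∃ M : ℝ, 0 ≤ M ∧ ∀ A : Set (Euc d), Bornology.IsBounded A → 0 < Metric.diam A →
      ∃ η : Euc d → ℝ, ContDiff ℝ (⊤ : ℕ∞) η ∧ (∀ x, 0 ≤ η x ∧ η x ≤ 1) ∧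
        (∀ x ∈ A, η x = 1) ∧ (∀ x, (∀ y ∈ A, ε * Metric.diam A ≤ dist x y) → η x = 0) ∧
        ∀ x, ‖fderiv ℝ η x‖ ≤ M * (Metric.diam A)⁻¹ := by
  let φ : ContDiffBump (0 : Euc d) := ⟨ε / 3, 2 * ε / 3, by positivity, by linarith⟩
  obtain ⟨K, hK⟩ : ∃ K, LipschitzWith K φ :=
    ContDiff.lipschitzWith_of_hasCompactSupport φ.hasCompactSupport (φ.contDiff (n := 1)) one_ne_zero
  obtain ⟨t, -, htf, htc⟩ := (isCompact_closedBall (0 : Euc d) 1).finite_cover_balls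
    (show (0 : ℝ) < ε / 3 by positivity)
  refine ⟨htf.toFinset.card * K, by positivity, fun A hA hr => ?_⟩
  obtain ⟨x0, hx0⟩ : A.Nonempty := by
    by_contra h
    simp [Set.not_nonempty_iff_eq_empty.1 h] at hr
  set r := Metric.diam A with hrdef
  -- `r⁻¹ • (x - x0)` is the rescaled variable, in which `A` lies in the unit ball.
  let f : Euc d → Euc d → ℝ := fun c x => φ (r⁻¹ • (x - x0) - c)
  let I := htf.toFinset.filter fun c => ∃ y ∈ A, ‖r⁻¹ • (y - x0) - c‖ < ε / 3
  have hf : ∀ c ∈ I, ContDiff ℝ (⊤ : ℕ∞) (f c) := fun c _ =>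
    φ.contDiff.comp (((contDiff_id.sub contDiff_const).const_smul r⁻¹).sub contDiff_const)
  have h01 : ∀ c ∈ I, ∀ x, 0 ≤ f c x ∧ f c x ≤ 1 := fun c _ x => ⟨φ.nonneg, φ.le_one⟩
  refine ⟨fun x => 1 - ∏ c ∈ I, (1 - f c x), contDiff_one_sub_prod I f hf,
    one_sub_prod_mem I f h01, fun x hx => ?_, fun x hx => ?_, fun x => ?_⟩
  · have hxb : r⁻¹ • (x - x0) ∈ closedBall (0 : Euc d) 1 := by
      rw [mem_closedBall_zero_iff, norm_smul, norm_inv, Real.norm_of_nonneg hr.le, ← dist_eq_norm,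
        inv_mul_le_iff₀ hr, mul_one]
      exact Metric.dist_le_diam_of_mem hA hx hx0
    obtain ⟨c, hc, hxc⟩ := Set.mem_iUnion₂.1 (htc hxb)
    rw [mem_ball_iff_norm] at hxc
    refine one_sub_prod_eq_one I f x (i := c) ?_ ?_
    · exact Finset.mem_filter.2 ⟨htf.mem_toFinset.2 hc, x, hx, hxc⟩
    · exact φ.one_of_mem_closedBall (mem_closedBall_zero_iff.2 hxc.le)
  · refine one_sub_prod_eq_zero I f x fun c hc => ?_
    obtain ⟨-, y, hy, hyc⟩ := Finset.mem_filter.1 hc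
    refine φ.zero_of_le_dist ?_
    rw [dist_zero_right]
    change 2 * ε / 3 ≤ _
    by_contra! hlt
    have h1 : ‖r⁻¹ • (x - y)‖ < ε := by
      have : r⁻¹ • (x - y) = (r⁻¹ • (x - x0) - c) - (r⁻¹ • (y - x0) - c) := by module
      rw [this]
      exact (norm_sub_le _ _).trans_lt (by linarith)
    rw [norm_smul, norm_inv, Real.norm_of_nonneg hr.le, ← dist_eq_norm,
      inv_mul_lt_iff₀ hr] at h1
    linarith [hx y hy]
  · refine (norm_fderiv_one_sub_prod_le I f hf h01 x).trans ?_
    have hb : ∀ c ∈ I, ‖fderiv ℝ (f c) x‖ ≤ K * r⁻¹ := fun c _ => by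
      have hL : LipschitzWith (K * (r⁻¹).toNNReal) (f c) := by
        refine hK.comp (LipschitzWith.of_dist_le_mul fun a b => ?_)
        rw [Real.coe_toNNReal _ (by positivity), dist_eq_norm, dist_eq_norm]
        have : r⁻¹ • (a - x0) - c - (r⁻¹ • (b - x0) - c) = r⁻¹ • (a - b) := by module
        rw [this, norm_smul, Real.norm_of_nonneg (by positivity)]
      have := norm_fderiv_le_of_lipschitz ℝ hL (x₀ := x)
      rwa [NNReal.coe_mul, Real.coe_toNNReal _ (by positivity)] at this
    refine (Finset.sum_le_card_nsmul I _ _ hb).trans ?_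
    rw [nsmul_eq_mul, ← mul_assoc]
    gcongr
    exact Finset.filter_subset _ _

lemma mem_patchSet_one {d : ℕ} {𝒯 : Finset (Set (Euc d))} {ω : Set (Euc d)} {x : Euc d} :
    x ∈ patchSet 𝒯 1 ω ↔ ∃ T ∈ 𝒯, (T ∩ ω).Nonempty ∧ x ∈ T := by
  simp [patchSet, and_assoc]

lemma mem_PiFin_one {d : ℕ} {𝒯 : Finset (Set (Euc d))} {T T' : Set (Euc d)} (hT : T ∈ 𝒯)
    (h : (T ∩ T').Nonempty) : T ∈ PiFin 𝒯 1 T' :=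
  Finset.mem_filter.2 ⟨hT, fun _ hx => mem_patchSet_one.2 ⟨T, hT, h, hx⟩⟩

/-- Lemma A.1, smooth cut-off functions. Under (M1)–(M4) there is `C > 0`
(depending only on `d`, `C_patch`, `C_locuni`, `C_shape`, `C_cent`) such that for every
`𝒮 ⊆ 𝒯` there exist an open neighborhood `O` of `Γ` and a function `χ`, `C^∞` on `O`, with
`0 ≤ χ ≤ 1` on `O`, `χ = 1` on `⋃𝒮`, `χ = 0` on `Γ∖π(⋃𝒮)`, and `|∇χ| ≤ C h_T⁻¹` on each
`T ∈ 𝒯`. -/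
theorem stmt_12 (d : ℕ) (hd : 2 ≤ d) (Cpatch : ℕ) (Clocuni Cshape Ccent : ℝ)
    (hClocuni : 0 < Clocuni) (hCshape : 0 < Cshape) (hCcent : 0 < Ccent) :
    ∃ C : ℝ, 0 < C ∧
      ∀ (Γ : Set (Euc d)), IsCompact Γ →
        0 < (μH[(d : ℝ) - 1] : Measure (Euc d)) Γ →
        (μH[(d : ℝ) - 1] : Measure (Euc d)) Γ < ⊤ →
        ∀ 𝒯 : Finset (Set (Euc d)), IsMesh (surfMeasure d Γ) Γ 𝒯 →
        -- (M1) bounded element patch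
        (∀ T ∈ 𝒯, (PiFin 𝒯 1 T).card ≤ Cpatch) →
        -- (M2) local quasi-uniformity
        (∀ T ∈ 𝒯, ∀ T' ∈ PiFin 𝒯 1 T, Metric.diam T ≤ Clocuni * Metric.diam T') →
        -- (M3) shape-regularity
        (∀ T ∈ 𝒯, Cshape⁻¹ ≤ Metric.diam T / hSize d Γ T ∧
          Metric.diam T / hSize d Γ T ≤ Cshape) →
        -- (M4) elements lie in the center of their patches
        (∀ T ∈ 𝒯, Metric.diam T ≤ Ccent * distConv d Γ T (Γ \ patchSet 𝒯 1 T)) →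
        ∀ 𝒮 : Finset (Set (Euc d)), 𝒮 ⊆ 𝒯 →
          ∃ (O : Set (Euc d)) (χ : Euc d → ℝ),
            IsOpen O ∧ Γ ⊆ O ∧ ContDiffOn ℝ (⊤ : ℕ∞) χ O ∧
            (∀ x ∈ O, 0 ≤ χ x ∧ χ x ≤ 1) ∧
            (∀ x ∈ ⋃₀ (𝒮 : Set (Set (Euc d))), χ x = 1) ∧
            (∀ x ∈ Γ \ patchSet 𝒯 1 (⋃₀ (𝒮 : Set (Set (Euc d)))), χ x = 0) ∧
            (∀ T ∈ 𝒯, ∀ x ∈ T, ‖fderiv ℝ χ x‖ ≤ C * (hSize d Γ T)⁻¹) := by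
  obtain ⟨M, hM, hbump⟩ := exists_bump d Ccent⁻¹ (inv_pos.2 hCcent)
  refine ⟨(Cpatch * Cpatch : ℕ) * (M * Clocuni ^ 2 * Cshape) + 1, by positivity, ?_⟩
  intro Γ _ _ _ 𝒯 hmesh hM1 hM2 hM3 hM4 𝒮 h𝒮
  -- A zero `h_T` would make the quotient in (M3) zero, contradicting its lower bound.
  have hpos : ∀ T ∈ 𝒯, 0 < hSize d Γ T ∧ 0 < Metric.diam T := fun T hT => by
    have h := (inv_pos.2 hCshape).trans_le (hM3 T hT).1
    have h0 : 0 ≤ hSize d Γ T := Real.rpow_nonneg ENNReal.toReal_nonneg _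
    have h1 : 0 < hSize d Γ T := by
      refine h0.lt_of_ne fun he => ?_
      simp [← he] at h
    exact ⟨h1, (div_pos_iff_of_pos_right h1).1 h⟩
  have hex : ∀ T : Set (Euc d), ∃ η : Euc d → ℝ, T ∈ 𝒯 → ContDiff ℝ (⊤ : ℕ∞) η ∧
      (∀ x, 0 ≤ η x ∧ η x ≤ 1) ∧ (∀ x ∈ T, η x = 1) ∧
      (∀ x, (∀ y ∈ T, Ccent⁻¹ * Metric.diam T ≤ dist x y) → η x = 0) ∧
      ∀ x, ‖fderiv ℝ η x‖ ≤ M * (Metric.diam T)⁻¹ := fun T => by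
    by_cases hT : T ∈ 𝒯
    · obtain ⟨η, h⟩ := hbump T (hmesh.1 T hT).1.isBounded (hpos T hT).2
      exact ⟨η, fun _ => h⟩
    · exact ⟨0, fun h => absurd h hT⟩
  choose η hη using hex
  have hf : ∀ T ∈ 𝒮, ContDiff ℝ (⊤ : ℕ∞) (η T) := fun T hT => (hη T (h𝒮 hT)).1
  have h01 : ∀ T ∈ 𝒮, ∀ x, 0 ≤ η T x ∧ η T x ≤ 1 := fun T hT => (hη T (h𝒮 hT)).2.1
  have hzero : ∀ T ∈ 𝒯, ∀ x ∈ Γ, x ∉ patchSet 𝒯 1 T → η T x = 0 := fun T hT x hx hxT => by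
    refine (hη T hT).2.2.2.1 x fun y hy => ?_
    have hmem : x ∈ Γ \ patchSet 𝒯 1 T := ⟨hx, hxT⟩
    have h := hM4 T hT
    rw [distConv, if_neg (Set.nonempty_of_mem hmem).ne_empty] at h
    rw [inv_mul_le_iff₀ hCcent]
    refine h.trans (mul_le_mul_of_nonneg_left ?_ hCcent.le)
    refine csInf_le ⟨0, ?_⟩ ⟨y, hy, x, hmem, dist_comm y x⟩
    rintro _ ⟨a, -, b, -, rfl⟩
    exact dist_nonneg
  refine ⟨Set.univ, fun x => 1 - ∏ T ∈ 𝒮, (1 - η T x), isOpen_univ, Set.subset_univ _,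
    (contDiff_one_sub_prod 𝒮 η hf).contDiffOn, fun x _ => one_sub_prod_mem 𝒮 η h01 x, ?_, ?_, ?_⟩
  · rintro x ⟨T, hT, hx⟩
    exact one_sub_prod_eq_one 𝒮 η x hT ((hη T (h𝒮 hT)).2.2.1 x hx)
  · rintro x ⟨hx, hxS⟩
    refine one_sub_prod_eq_zero 𝒮 η x fun T hT => hzero T (h𝒮 hT) x hx fun hxT => hxS ?_
    obtain ⟨T', hT', hne, hxT'⟩ := mem_patchSet_one.1 hxT
    exact mem_patchSet_one.2
      ⟨T', hT', hne.mono (Set.inter_subset_inter_right _ (Set.subset_sUnion_of_mem hT)), hxT'⟩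
  · intro T' hT' x hx
    obtain ⟨hh, hdiam⟩ := hpos T' hT'
    have hxΓ : x ∈ Γ := (hmesh.1 T' hT').2.1 hx
    let N := (PiFin 𝒯 1 T').biUnion fun T'' => PiFin 𝒯 1 T''
    have hN : N.card ≤ Cpatch * Cpatch := by
      refine (Finset.card_biUnion_le_card_mul _ _ Cpatch fun T'' hT'' =>
        hM1 T'' (Finset.mem_filter.1 hT'').1).trans ?_
      exact Nat.mul_le_mul_right _ (hM1 T' hT')
    have hB0 : 0 ≤ M * Clocuni ^ 2 * Cshape * (hSize d Γ T')⁻¹ := by positivity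
    have hout : ∀ T ∈ 𝒮, T ∉ N → ‖fderiv ℝ (η T) x‖ = 0 := fun T hT hTN => by
      have h0 : η T x = 0 := hzero T (h𝒮 hT) x hxΓ fun hxT => by
        obtain ⟨T'', hT'', hne, hxT''⟩ := mem_patchSet_one.1 hxT
        exact hTN (Finset.mem_biUnion.2 ⟨T'', mem_PiFin_one hT'' ⟨x, hxT'', hx⟩,
          mem_PiFin_one (h𝒮 hT) (Set.inter_comm _ _ ▸ hne)⟩)
      -- `x` is a global minimum of the nonnegative function `η T`.
      have hmin : IsLocalMin (η T) x :=
        Filter.Eventually.of_forall fun y => h0.le.trans (h01 T hT y).1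
      rw [hmin.fderiv_eq_zero, norm_zero]
    have hin : ∀ T ∈ N, T ∈ 𝒮 →
        ‖fderiv ℝ (η T) x‖ ≤ M * Clocuni ^ 2 * Cshape * (hSize d Γ T')⁻¹ := fun T hTN hT => by
      obtain ⟨T'', hT'', hTT''⟩ := Finset.mem_biUnion.1 hTN
      have h1 := hM2 T' hT' T'' hT''
      have h2 := hM2 T'' (Finset.mem_filter.1 hT'').1 T hTT''
      have hd := (hpos T (h𝒮 hT)).2
      have h3 : Metric.diam T' ≤ Clocuni ^ 2 * Metric.diam T := by
        refine h1.trans ((mul_le_mul_of_nonneg_left h2 hClocuni.le).trans_eq (by ring))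
      have h4 : hSize d Γ T' ≤ Cshape * Metric.diam T' := by
        have := (hM3 T' hT').1
        rwa [le_div_iff₀ hh, inv_mul_le_iff₀ hCshape] at this
      have h5 : hSize d Γ T' ≤ Clocuni ^ 2 * Cshape * Metric.diam T :=
        h4.trans ((mul_le_mul_of_nonneg_left h3 hCshape.le).trans_eq (by ring))
      refine ((hη T (h𝒮 hT)).2.2.2.2 x).trans ?_
      rw [mul_assoc M, mul_assoc M]
      refine mul_le_mul_of_nonneg_left ?_ hM
      rwa [← div_eq_mul_inv, le_div_iff₀ hh, inv_mul_le_iff₀ hd, mul_comm]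
    refine (norm_fderiv_one_sub_prod_le 𝒮 η hf h01 x).trans ?_
    calc ∑ T ∈ 𝒮, ‖fderiv ℝ (η T) x‖
        = ∑ T ∈ 𝒮 ∩ N, ‖fderiv ℝ (η T) x‖ :=
          (Finset.sum_subset Finset.inter_subset_left fun T hT hTN =>
            hout T hT fun h => hTN (Finset.mem_inter.2 ⟨hT, h⟩)).symm
      _ ≤ (𝒮 ∩ N).card • (M * Clocuni ^ 2 * Cshape * (hSize d Γ T')⁻¹) :=
          Finset.sum_le_card_nsmul _ _ _ fun T hT =>
            hin T (Finset.mem_inter.1 hT).2 (Finset.mem_inter.1 hT).1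
      _ ≤ (Cpatch * Cpatch : ℕ) * (M * Clocuni ^ 2 * Cshape * (hSize d Γ T')⁻¹) := by
          rw [nsmul_eq_mul]
          refine mul_le_mul_of_nonneg_right (Nat.cast_le.2 ?_) hB0
          exact (Finset.card_le_card Finset.inter_subset_right).trans hN
      _ ≤ ((Cpatch * Cpatch : ℕ) * (M * Clocuni ^ 2 * Cshape) + 1) * (hSize d Γ T')⁻¹ := by
          rw [add_mul, mul_assoc ((Cpatch * Cpatch : ℕ) : ℝ), one_mul]
          exact le_add_of_nonneg_right (inv_pos.2 hh).le
end
end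

section
/- Let 𝒯 and 𝒯′ be two meshes of Γ and let 0 < ρ < 1. Assume (R2) every element is the union of its successors: T = ⋃{T′ ∈ 𝒯′ : T′ ⊆ T} for all T ∈ 𝒯; and (R3) reduction of sons: μ(T′) ≤ ρ·μ(T) whenever T ∈ 𝒯 and T′ ∈ 𝒯′ with T′ ⊊ T. Then #(𝒯∖𝒯′) ≤ #𝒯′ − #𝒯. -/
/-!
Assign to each `T ∈ 𝒯` the finite set of its successors, the elements of `𝒯'` contained in `T`.
These sets are pairwise disjoint for distinct `T`: a common successor would lie in a null
intersection while having positive measure. An element of `𝒯 ∩ 𝒯'` is its own successor. An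
element of `𝒯 \ 𝒯'` is nonempty and is the union of its successors, all of them different from it,
so it has at least two. Summing over `𝒯` gives `#𝒯 + #(𝒯 \ 𝒯') ≤ #𝒯'`.
-/

open MeasureTheory Metric Set
open scoped ENNReal NNReal Classical

noncomputable section

/-- If the mesh `𝒯'` refines the mesh `𝒯` in the sense that each element of
`𝒯` is the union of its successors (R2) and proper successors are uniformly smaller (R3),
then `#(𝒯 \ 𝒯') ≤ #𝒯' − #𝒯` (as integers). -/
theorem stmt_15 (d : ℕ) (hd : 2 ≤ d)
    (Γ : Set (Euc d)) (hΓc : IsCompact Γ)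
    (hΓpos : 0 < (μH[(d : ℝ) - 1] : Measure (Euc d)) Γ)
    (hΓfin : (μH[(d : ℝ) - 1] : Measure (Euc d)) Γ < ⊤)
    (𝒯 𝒯' : Finset (Set (Euc d)))
    (hmesh : IsMesh (surfMeasure d Γ) Γ 𝒯) (hmesh' : IsMesh (surfMeasure d Γ) Γ 𝒯')
    (ρ : ℝ) (hρ : ρ ∈ Set.Ioo (0 : ℝ) 1)
    (hR2 : ∀ T ∈ 𝒯, T = ⋃₀ {T' : Set (Euc d) | T' ∈ 𝒯' ∧ T' ⊆ T})
    (hR3 : ∀ T ∈ 𝒯, ∀ T' ∈ 𝒯', T' ⊂ T →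
      surfMeasure d Γ T' ≤ ENNReal.ofReal ρ * surfMeasure d Γ T) :
    ((𝒯 \ 𝒯').card : ℤ) ≤ (𝒯'.card : ℤ) - (𝒯.card : ℤ) := by
  let S : Set (Euc d) → Finset (Set (Euc d)) := fun T => 𝒯'.filter (· ⊆ T)
  -- A common successor of two distinct elements would lie in their null intersection.
  have hdisj : (𝒯 : Set (Set (Euc d))).PairwiseDisjoint S := by
    intro A hA B hB hAB
    refine Finset.disjoint_left.mpr fun T' h1 h2 => ?_
    simp only [S, Finset.mem_filter] at h1 h2
    exact (hmesh'.1 T' h1.1).2.2.ne'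
      (measure_mono_null (subset_inter h1.2 h2.2) (hmesh.2.2 A hA B hB hAB))
  have hcount : ∀ T ∈ 𝒯, 1 + (if T ∉ 𝒯' then 1 else 0) ≤ (S T).card := by
    intro T hT
    by_cases hT' : T ∈ 𝒯'
    · have : T ∈ S T := Finset.mem_filter.mpr ⟨hT', Subset.rfl⟩
      simpa [hT'] using Finset.card_pos.mpr ⟨T, this⟩
    · have hpos := (hmesh.1 T hT).2.2
      have hne : T.Nonempty := nonempty_of_measure_ne_zero hpos.ne'
      have hcov := hR2 T hT
      obtain ⟨x, hx⟩ := hne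
      rw [hcov] at hx
      obtain ⟨A, ⟨hA, hAT⟩, -⟩ := hx
      have hAS : A ∈ S T := Finset.mem_filter.mpr ⟨hA, hAT⟩
      have hAne : A ≠ T := fun h => hT' (h ▸ hA)
      simp only [hT', not_false_eq_true, if_true]
      by_contra hlt
      -- A single successor would cover `T` and hence equal it, although `T ∉ 𝒯'`.
      have hsub : T ⊆ A := by
        intro y hy
        rw [hcov] at hy
        obtain ⟨B, ⟨hB, hBT⟩, hyB⟩ := hy
        have hBS : B ∈ S T := Finset.mem_filter.mpr ⟨hB, hBT⟩
        have : B = A := Finset.card_le_one.mp (by omega) B hBS A hAS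
        exact this ▸ hyB
      exact hAne (hAT.antisymm hsub)
  have hle : ∑ T ∈ 𝒯, (S T).card ≤ 𝒯'.card := by
    rw [← Finset.card_biUnion hdisj]
    exact Finset.card_le_card (Finset.biUnion_subset.mpr fun T _ => Finset.filter_subset _ _)
  have hsum := (Finset.sum_le_sum hcount).trans hle
  rw [Finset.sum_add_distrib, ← Finset.card_filter, ← Finset.card_eq_sum_ones,
    Finset.filter_notMem_eq_sdiff] at hsum
  omega
end
end

section
/- Let H be a complex Hilbert space and let a: H × H → ℂ be a sesquilinear form that is bounded (|a(u,v)| ≤ M‖u‖‖v‖ for all u,v ∈ H), Hermitian (a(u,v) = conj(a(v,u)) for all u,v ∈ H) and elliptic (Re a(u,u) ≥ c‖u‖² for all u ∈ H, with c > 0). Let (X_ℓ)_{ℓ∈ℕ₀} be a nested sequence of closed subspaces of H (X_ℓ ⊆ X_{ℓ+1} for all ℓ), let φ ∈ H, and for each ℓ let Φ_ℓ ∈ X_ℓ be the (unique) Galerkin approximation of φ, i.e., a(φ − Φ_ℓ, w) = 0 for all w ∈ X_ℓ. Then for all ℓ, N ∈ ℕ₀ one has Σ_{j=ℓ}^{ℓ+N}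 ‖Φ_{j+1} − Φ_j‖² ≤ (M/c) ‖φ − Φ_ℓ‖². (This is the general quasi-orthogonality for Hermitian elliptic forms, obtained from the Pythagoras identity ‖φ−Φ_j‖²_a = ‖φ−Φ_{j+1}‖²_a + ‖Φ_{j+1}−Φ_j‖²_a in the energy norm ‖u‖²_a := a(u,u).) -/
/-! For the squared energy norm `a(u, u)`, Galerkin orthogonality of `φ - Φ (j + 1)` to
`Φ (j + 1) - Φ j ∈ X (j + 1)` gives the Pythagoras identity
`a(φ - Φ j, φ - Φ j) = a(φ - Φ (j + 1), φ - Φ (j + 1)) + a(Φ (j + 1) - Φ j, Φ (j + 1) - Φ j)`.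
Ellipticity bounds the last term below by `c ‖Φ (j + 1) - Φ j‖ ^ 2`, so the sum telescopes to at
most `Re a(φ - Φ ℓ, φ - Φ ℓ) ≤ M ‖φ - Φ ℓ‖ ^ 2`. -/

open scoped ComplexConjugate

/-- general quasi-orthogonality for Hermitian elliptic forms.
For a bounded, Hermitian, elliptic sesquilinear form `a` on a complex Hilbert space `H`,
a nested sequence of closed subspaces `X_ℓ`, and the Galerkin approximations `Φ_ℓ ∈ X_ℓ` of
`φ ∈ H`, one has `Σ_{j=ℓ}^{ℓ+N} ‖Φ_{j+1} − Φ_j‖² ≤ (M/c)‖φ − Φ_ℓ‖²`. -/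
theorem stmt_16 {H : Type*} [NormedAddCommGroup H] [InnerProductSpace ℂ H] [CompleteSpace H]
    (a : H → H → ℂ) (M c : ℝ) (hc : 0 < c)
    (hadd₁ : ∀ u u' v : H, a (u + u') v = a u v + a u' v)
    (hsmul₁ : ∀ (z : ℂ) (u v : H), a (z • u) v = conj z * a u v)
    (hadd₂ : ∀ u v v' : H, a u (v + v') = a u v + a u v')
    (hsmul₂ : ∀ (z : ℂ) (u v : H), a u (z • v) = z * a u v)
    (hbdd : ∀ u v : H, ‖a u v‖ ≤ M * ‖u‖ * ‖v‖)
    (hherm : ∀ u v : H, a u v = conj (a v u))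
    (hell : ∀ u : H, c * ‖u‖ ^ 2 ≤ (a u u).re)
    (X : ℕ → Submodule ℂ H) (hclosed : ∀ ℓ, IsClosed (X ℓ : Set H))
    (hnested : ∀ ℓ, X ℓ ≤ X (ℓ + 1))
    (φ : H) (Φ : ℕ → H) (hmem : ∀ ℓ, Φ ℓ ∈ X ℓ)
    (hgal : ∀ ℓ, ∀ w ∈ X ℓ, a (φ - Φ ℓ) w = 0) :
    ∀ ℓ N : ℕ, ∑ j ∈ Finset.Icc ℓ (ℓ + N), ‖Φ (j + 1) - Φ j‖ ^ 2
      ≤ (M / c) * ‖φ - Φ ℓ‖ ^ 2 := by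
  have pyth : ∀ j, a (φ - Φ j) (φ - Φ j) = a (φ - Φ (j + 1)) (φ - Φ (j + 1))
      + a (Φ (j + 1) - Φ j) (Φ (j + 1) - Φ j) := by
    intro j
    have h1 : a (φ - Φ (j + 1)) (Φ (j + 1) - Φ j) = 0 :=
      hgal (j + 1) _ ((X (j + 1)).sub_mem (hmem _) (hnested j (hmem j)))
    have h2 : a (Φ (j + 1) - Φ j) (φ - Φ (j + 1)) = 0 := by rw [hherm, h1, map_zero]
    rw [show φ - Φ j = (φ - Φ (j + 1)) + (Φ (j + 1) - Φ j) by abel,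
      hadd₁, hadd₂, hadd₂, h1, h2]
    ring
  have step : ∀ j, c * ‖Φ (j + 1) - Φ j‖ ^ 2 + (a (φ - Φ (j + 1)) (φ - Φ (j + 1))).re
      ≤ (a (φ - Φ j) (φ - Φ j)).re := by
    intro j
    rw [pyth j, Complex.add_re]
    linarith [hell (Φ (j + 1) - Φ j)]
  intro ℓ N
  have tele : c * ∑ j ∈ Finset.Icc ℓ (ℓ + N), ‖Φ (j + 1) - Φ j‖ ^ 2
      + (a (φ - Φ (ℓ + N + 1)) (φ - Φ (ℓ + N + 1))).re ≤ (a (φ - Φ ℓ) (φ - Φ ℓ)).re := by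
    induction N with
    | zero => simpa using step ℓ
    | succ N ih =>
      rw [← add_assoc, Finset.sum_Icc_succ_top (by omega), mul_add]
      linarith [step (ℓ + N + 1)]
  have hpos : 0 ≤ (a (φ - Φ (ℓ + N + 1)) (φ - Φ (ℓ + N + 1))).re :=
    le_trans (by positivity) (hell _)
  have hup : (a (φ - Φ ℓ) (φ - Φ ℓ)).re ≤ M * ‖φ - Φ ℓ‖ * ‖φ - Φ ℓ‖ :=
    (Complex.re_le_norm _).trans (hbdd _ _)
  rw [div_mul_eq_mul_div, le_div_iff₀ hc]
  linarith
end
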